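/- arXiv:2510.22259 — 2 statements merged into one kernel-verified Lean document; each statement's English description precedes it below -/
import Mathlib

section
/- Let s ≥ 2. The extended code of C_{(2,n,3,1)} has length n+1, dimension n − 4s, and minimum distance exactly 4, and it is distance-optimal with respect to the sphere packing bound: every binary linear code of length n+1 and dimension n − 4s has minimum distance at most 4. -/
open Finset

/-- The binary cyclic (BCH-type) code of length `n` over GF(2), consisting of all
words `c` such that `∑ i, c i • β ^ (j * i) = 0` for every `j` in the check set `J`. -/
def BCHCode {F : Type} [Field F] [Algebra (ZMod 2) F] (n : ℕ) (β : F) (J : Finset ℕ) :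
    Submodule (ZMod 2) (Fin n → ZMod 2) where
  carrier := {c | ∀ j ∈ J, ∑ i : Fin n, c i • β ^ (j * (i : ℕ)) = 0}
  add_mem' := by
    intro a b ha hb j hj
    simp only [Set.mem_setOf_eq, Pi.add_apply, add_smul, Finset.sum_add_distrib] at *
    rw [ha j hj, hb j hj, add_zero]
  zero_mem' := by
    intro j hj
    simp
  smul_mem' := by
    intro r c hc j hj
    simp only [Set.mem_setOf_eq, Pi.smul_apply, smul_assoc, ← Finset.smul_sum] at *
    rw [hc j hj, smul_zero]

/-- The (Euclidean) dual of a binary linear code. -/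
def dualCode {N : ℕ} (C : Submodule (ZMod 2) (Fin N → ZMod 2)) :
    Submodule (ZMod 2) (Fin N → ZMod 2) where
  carrier := {b | ∀ c ∈ C, ∑ i, b i * c i = 0}
  add_mem' := by
    intro a b ha hb c hc
    simp only [Set.mem_setOf_eq, Pi.add_apply, add_mul, Finset.sum_add_distrib] at *
    rw [ha c hc, hb c hc, add_zero]
  zero_mem' := by
    intro c hc
    simp
  smul_mem' := by
    intro r b hb c hc
    simp only [Set.mem_setOf_eq, Pi.smul_apply, smul_eq_mul, mul_assoc, ← Finset.mul_sum] at *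
    rw [hb c hc, mul_zero]

/-- The linear map appending an overall parity-check coordinate. -/
def extendMap (N : ℕ) : (Fin N → ZMod 2) →ₗ[ZMod 2] (Fin (N + 1) → ZMod 2) where
  toFun c := fun j => if h : (j : ℕ) < N then c ⟨j, h⟩ else ∑ i, c i
  map_add' a b := by
    funext j
    by_cases h : (j : ℕ) < N <;> simp [h, Finset.sum_add_distrib]
  map_smul' r c := by
    funext j
    by_cases h : (j : ℕ) < N <;> simp [h, Finset.mul_sum]

/-- The extended code of a binary linear code. -/
def extendedCode {N : ℕ} (C : Submodule (ZMod 2) (Fin N → ZMod 2)) :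
    Submodule (ZMod 2) (Fin (N + 1) → ZMod 2) :=
  C.map (extendMap N)

/-- The minimum distance (= minimum nonzero Hamming weight) of a binary linear code. -/
noncomputable def minDist {N : ℕ} (C : Submodule (ZMod 2) (Fin N → ZMod 2)) : ℕ :=
  sInf {w | ∃ c ∈ C, c ≠ 0 ∧ hammingNorm c = w}

/-- The number of codewords of Hamming weight `w` in a binary linear code. -/
noncomputable def weightCount {N : ℕ} (C : Submodule (ZMod 2) (Fin N → ZMod 2)) (w : ℕ) : ℕ :=
  Set.ncard {c : Fin N → ZMod 2 | c ∈ C ∧ hammingNorm c = w}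

/-- The 2-cyclotomic coset of `i` modulo `n`. -/
def cycCoset (n i : ℕ) : Set ℕ := {x | ∃ j : ℕ, x = i * 2 ^ j % n}

/-- The coset leader (smallest element) of the 2-cyclotomic coset of `i` modulo `n`. -/
noncomputable def cosetLeader (n i : ℕ) : ℕ := sInf (cycCoset n i)

/- Let `F` be a field with `2 ^ m` elements and let `β : F` have order `n`. The powers
`β ^ 0, …, β ^ (n - 1)` span the subfield generated by `β`, so the code with parity check `β` has
codimension `deg (minpoly β)`. These powers are distinct and nonzero, so no codeword has weight `1`
or `2`; the extension makes all weights even, which leaves weights at least `4`. In the other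
direction, a code of length `n + 1` and codimension `m + 1` without nonzero words of weight at most
`4` has disjoint balls of radius `2` around its words, which is impossible as soon as
`2 ^ (m + 1) < 1 + (n + 1) + (n + 1).choose 2`. The same inequality forces `β` to generate `F`,
since an element of a proper subfield has order less than `2 ^ (m / 2)`. -/

lemma zmod_two_eq_zero_or_one (a : ZMod 2) : a = 0 ∨ a = 1 := by
  decide +revert

section HammingBound

variable {ι : Type*} [Fintype ι]

lemma exists_mem_hammingNorm_le_two_mul {G : Type*} [AddGroup G] [Finite G] [DecidableEq G]
    (D : AddSubgroup (ι → G)) {t : ℕ}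
    (hcard : Nat.card (ι → G) < Nat.card D * Nat.card {x : ι → G // hammingNorm x ≤ t}) :
    ∃ c ∈ D, c ≠ 0 ∧ hammingNorm c ≤ 2 * t := by
  -- Two balls of radius `t` around elements of `D` must overlap.
  let translate : {x : ι → G // hammingNorm x ≤ t} × D → ι → G := fun p ↦ p.1 + p.2
  have not_injective : ¬ Function.Injective translate := fun h ↦ hcard.not_ge <| by
    simpa only [Nat.card_prod, mul_comm] using Nat.card_le_card_of_injective _ h
  obtain ⟨⟨⟨x, hx⟩, c, hc⟩, ⟨⟨y, hy⟩, d, hd⟩, heq, hne⟩ :=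
    Function.not_injective_iff.mp not_injective
  change x + c = y + d at heq
  have difference : -y + x = d - c := by
    rw [eq_sub_iff_add_eq, add_assoc, heq, neg_add_cancel_left]
  refine ⟨d - c, D.sub_mem hd hc, fun h0 ↦ hne ?_, ?_⟩
  · obtain rfl : d = c := sub_eq_zero.mp h0
    obtain rfl : x = y := add_right_cancel heq
    rfl
  · calc hammingNorm (d - c) = hammingDist y x := by
          rw [← difference, hammingDist_eq_hammingNorm]
      _ ≤ hammingDist y 0 + hammingDist 0 x := hammingDist_triangle y 0 x
      _ = hammingNorm y + hammingNorm x := by rw [hammingDist_zero_right, hammingDist_zero_left]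
      _ ≤ 2 * t := by omega

lemma card_filter_card_le_eq_sum_choose (t : ℕ) :
    #{A : Finset ι | #A ≤ t} = ∑ i ∈ range (t + 1), (Fintype.card ι).choose i := by
  classical
  rw [card_eq_sum_card_fiberwise (f := card) (t := range (t + 1))
    fun A hA ↦ by simpa [Nat.lt_succ_iff] using hA]
  refine sum_congr rfl fun i hi ↦ ?_
  have fiber_eq : {A ∈ ({A | #A ≤ t} : Finset (Finset ι)) | #A = i} = powersetCard i univ := by
    ext A
    simp only [mem_filter, mem_univ, true_and, mem_powersetCard, subset_univ]
    have := mem_range.mp hi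
    omega
  rw [fiber_eq, card_powersetCard, card_univ]

lemma natCard_hammingNorm_le_eq_sum_choose (t : ℕ) :
    Nat.card {x : ι → ZMod 2 // hammingNorm x ≤ t} =
      ∑ i ∈ range (t + 1), (Fintype.card ι).choose i := by
  classical
  let supportEquiv : (ι → ZMod 2) ≃ Finset ι :=
    { toFun x := {i | x i ≠ 0}
      invFun A i := if i ∈ A then 1 else 0
      left_inv x := by
        funext i
        rcases zmod_two_eq_zero_or_one (x i) with h | h <;> simp [h]
      right_inv A := by ext i; simp }
  let ballEquiv : {x : ι → ZMod 2 // hammingNorm x ≤ t} ≃ {A : Finset ι // #A ≤ t} :=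
    supportEquiv.subtypeEquiv fun _ ↦ Iff.rfl
  rw [Nat.card_congr ballEquiv, Nat.card_eq_fintype_card, Fintype.card_subtype,
    card_filter_card_le_eq_sum_choose]

lemma exists_mem_hammingNorm_le_two_mul_of_finrank_add_eq {D : Submodule (ZMod 2) (ι → ZMod 2)}
    {r t : ℕ} (hdim : Module.finrank (ZMod 2) D + r = Fintype.card ι)
    (hr : 2 ^ r < ∑ i ∈ range (t + 1), (Fintype.card ι).choose i) :
    ∃ c ∈ D, c ≠ 0 ∧ hammingNorm c ≤ 2 * t := by
  apply exists_mem_hammingNorm_le_two_mul D.toAddSubgroup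
  have card_D : Nat.card D.toAddSubgroup = 2 ^ Module.finrank (ZMod 2) D := by
    simpa using Module.natCard_eq_pow_finrank (K := ZMod 2) (V := D)
  calc Nat.card (ι → ZMod 2) = 2 ^ Module.finrank (ZMod 2) D * 2 ^ r := by
        rw [← pow_add, hdim, Nat.card_fun, Nat.card_zmod, Nat.card_eq_fintype_card]
    _ < _ := by
        rw [card_D, natCard_hammingNorm_le_eq_sum_choose]
        gcongr

end HammingBound

section MinDist

variable {N : ℕ} {C : Submodule (ZMod 2) (Fin N → ZMod 2)}

lemma minDist_le_hammingNorm {c : Fin N → ZMod 2} (hc : c ∈ C) (hc0 : c ≠ 0) :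
    minDist C ≤ hammingNorm c :=
  Nat.sInf_le ⟨c, hc, hc0, rfl⟩

lemma le_minDist (hC : C ≠ ⊥) {d : ℕ} (hd : ∀ c ∈ C, c ≠ 0 → d ≤ hammingNorm c) :
    d ≤ minDist C := by
  obtain ⟨c, hc, hc0⟩ := C.ne_bot_iff.mp hC
  refine le_csInf ⟨_, c, hc, hc0, rfl⟩ ?_
  rintro _ ⟨b, hb, hb0, rfl⟩
  exact hd b hb hb0

lemma minDist_le_two_mul_of_finrank_add_eq {r t : ℕ} (hdim : Module.finrank (ZMod 2) C + r = N)
    (hr : 2 ^ r < ∑ i ∈ range (t + 1), N.choose i) : minDist C ≤ 2 * t := by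
  obtain ⟨c, hc, hc0, hweight⟩ := exists_mem_hammingNorm_le_two_mul_of_finrank_add_eq
    (hdim.trans (Fintype.card_fin N).symm) (by rwa [Fintype.card_fin])
  exact (minDist_le_hammingNorm hc hc0).trans hweight

lemma minDist_eq_two_mul_of_finrank_add_eq {r t : ℕ} (hdim : Module.finrank (ZMod 2) C + r = N)
    (hr : 2 ^ r < ∑ i ∈ range (t + 1), N.choose i)
    (ht : ∀ c ∈ C, c ≠ 0 → 2 * t ≤ hammingNorm c) : minDist C = 2 * t := by
  refine (minDist_le_two_mul_of_finrank_add_eq hdim hr).antisymm (le_minDist ?_ ht)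
  obtain ⟨c, hc, hc0, -⟩ := exists_mem_hammingNorm_le_two_mul_of_finrank_add_eq
    (hdim.trans (Fintype.card_fin N).symm) (by rwa [Fintype.card_fin])
  exact C.ne_bot_iff.mpr ⟨c, hc, hc0⟩

end MinDist

section BinaryWords

variable {ι : Type*} [Fintype ι]

lemma sum_smul_eq_sum_support {M : Type*} [AddCommMonoid M] [Module (ZMod 2) M]
    (c : ι → ZMod 2) (v : ι → M) : ∑ i, c i • v i = ∑ i with c i ≠ 0, v i := by
  rw [sum_filter]
  refine sum_congr rfl fun i _ ↦ ?_
  rcases zmod_two_eq_zero_or_one (c i) with h | h <;> simp [h]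

lemma natCast_hammingNorm_eq_sum (c : ι → ZMod 2) : (hammingNorm c : ZMod 2) = ∑ i, c i := by
  simpa [hammingNorm] using (sum_smul_eq_sum_support c fun _ ↦ (1 : ZMod 2)).symm

lemma three_le_hammingNorm_of_sum_smul_eq_zero {M : Type*} [AddCommGroup M] [Module (ZMod 2) M]
    {v : ι → M} (hv : Function.Injective v) (hv0 : ∀ i, v i ≠ 0) {c : ι → ZMod 2} (hc : c ≠ 0)
    (hsum : ∑ i, c i • v i = 0) : 3 ≤ hammingNorm c := by
  classical
  rw [sum_smul_eq_sum_support] at hsum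
  have weight_ne_zero : hammingNorm c ≠ 0 := hammingNorm_ne_zero_iff.mpr hc
  have weight_ne_one : hammingNorm c ≠ 1 := by
    intro h
    obtain ⟨i, hi⟩ := card_eq_one.mp h
    rw [hi, sum_singleton] at hsum
    exact hv0 i hsum
  have weight_ne_two : hammingNorm c ≠ 2 := by
    intro h
    obtain ⟨i, j, hij, hsupp⟩ := card_eq_two.mp h
    rw [hsupp, sum_pair hij, ← ZModModule.sub_eq_add, sub_eq_zero] at hsum
    exact hij (hv hsum)
  omega

end BinaryWords

section ExtendedCode

variable {N : ℕ}

@[simp]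
lemma extendMap_castSucc (c : Fin N → ZMod 2) (i : Fin N) : extendMap N c i.castSucc = c i := by
  simp [extendMap]

@[simp]
lemma extendMap_last (c : Fin N → ZMod 2) : extendMap N c (Fin.last N) = ∑ i, c i := by
  simp [extendMap]

lemma extendMap_injective : Function.Injective (extendMap N) := fun a b h ↦
  funext fun i ↦ by simpa using congrFun h i.castSucc

lemma finrank_extendedCode (C : Submodule (ZMod 2) (Fin N → ZMod 2)) :
    Module.finrank (ZMod 2) (extendedCode C) = Module.finrank (ZMod 2) C :=
  (Submodule.equivMapOfInjective _ extendMap_injective C).finrank_eq.symm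

lemma even_hammingNorm_extendMap (c : Fin N → ZMod 2) : Even (hammingNorm (extendMap N c)) := by
  rw [← ZMod.natCast_eq_zero_iff_even, natCast_hammingNorm_eq_sum, Fin.sum_univ_castSucc]
  simp only [extendMap_castSucc, extendMap_last, CharTwo.add_self_eq_zero]

lemma hammingNorm_le_hammingNorm_extendMap (c : Fin N → ZMod 2) :
    hammingNorm c ≤ hammingNorm (extendMap N c) := by
  simp only [hammingNorm, card_filter, Fin.sum_univ_castSucc, extendMap_castSucc]
  exact Nat.le_add_right _ _

lemma add_one_le_hammingNorm_of_mem_extendedCode {C : Submodule (ZMod 2) (Fin N → ZMod 2)} {d : ℕ}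
    (hd : Odd d) (hC : ∀ c ∈ C, c ≠ 0 → d ≤ hammingNorm c) :
    ∀ c ∈ extendedCode C, c ≠ 0 → d + 1 ≤ hammingNorm c := by
  rintro _ ⟨c, hc, rfl⟩ hc0
  have le_weight : d ≤ hammingNorm (extendMap N c) :=
    (hC c hc (by rintro rfl; exact hc0 (map_zero _))).trans (hammingNorm_le_hammingNorm_extendMap c)
  have weight_ne : d ≠ hammingNorm (extendMap N c) := by
    rintro rfl
    exact Nat.not_odd_iff_even.mpr (even_hammingNorm_extendMap c) hd
  exact le_weight.lt_of_ne weight_ne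

end ExtendedCode

lemma isIntegral_of_isOfFinOrder {R A : Type*} [CommRing R] [Ring A] [Algebra R A] {a : A}
    (ha : IsOfFinOrder a) : IsIntegral R a :=
  .of_pow ha.orderOf_pos (pow_orderOf_eq_one a ▸ isIntegral_one)

lemma span_range_pow_eq_adjoin {R A : Type*} [CommSemiring R] [Semiring A] [Algebra R A] {a : A}
    (ha : IsOfFinOrder a) :
    Submodule.span R (Set.range fun i : Fin (orderOf a) ↦ a ^ (i : ℕ)) =
      Subalgebra.toSubmodule (Algebra.adjoin R {a}) := by
  classical
  have range_eq : Set.range (fun i : Fin (orderOf a) ↦ a ^ (i : ℕ)) = Submonoid.powers a := by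
    rw [ha.powers_eq_image_range_orderOf]
    ext x
    simp [Fin.exists_iff]
  rw [range_eq, Algebra.adjoin_eq_span, Submonoid.powers_eq_closure]

open IntermediateField in
lemma adjoin_simple_eq_top_of_card_lt {K L : Type*} [Field K] [Field L] [Algebra K L] [Finite L]
    {a : L} (ha : Nat.card L < (orderOf a + 1) ^ 2) : K⟮a⟯ = ⊤ := by
  rw [← finrank_eq_one_iff_eq_top]
  have order_lt : orderOf a < Nat.card K⟮a⟯ := by
    have orderOf_gen : orderOf (AdjoinSimple.gen K a) = orderOf a :=
      (orderOf_injective (K⟮a⟯.val : K⟮a⟯ →* L) K⟮a⟯.val.injective (AdjoinSimple.gen K a)).symm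
    exact orderOf_gen ▸ orderOf_lt_card (AdjoinSimple.gen K a)
  have card_L : Nat.card L = Nat.card K⟮a⟯ ^ Module.finrank K⟮a⟯ L :=
    Module.natCard_eq_pow_finrank
  have degree_pos : 0 < Module.finrank K⟮a⟯ L := Module.finrank_pos
  by_contra degree_ne_one
  refine ha.not_ge ?_
  calc (orderOf a + 1) ^ 2 ≤ Nat.card K⟮a⟯ ^ 2 := by gcongr; omega
    _ ≤ Nat.card K⟮a⟯ ^ Module.finrank K⟮a⟯ L := by gcongr <;> omega
    _ = Nat.card L := card_L.symm

section BCHCode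

variable {F : Type} [Field F] [Algebra (ZMod 2) F] {β : F}

lemma mem_BCHCode_one {n : ℕ} {c : Fin n → ZMod 2} :
    c ∈ BCHCode n β {1} ↔ ∑ i, c i • β ^ (i : ℕ) = 0 := by
  change (∀ j ∈ ({1} : Finset ℕ), ∑ i : Fin n, c i • β ^ (j * (i : ℕ)) = 0) ↔ _
  simp

lemma finrank_BCHCode_one_add_natDegree_minpoly (hβ : IsOfFinOrder β) :
    Module.finrank (ZMod 2) (BCHCode (orderOf β) β {1}) + (minpoly (ZMod 2) β).natDegree =
      orderOf β := by
  let syndrome := Fintype.linearCombination (ZMod 2) fun i : Fin (orderOf β) ↦ β ^ (i : ℕ)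
  have ker_syndrome : LinearMap.ker syndrome = BCHCode (orderOf β) β {1} := by
    ext c
    rw [LinearMap.mem_ker, mem_BCHCode_one, Fintype.linearCombination_apply]
  have finrank_range : Module.finrank (ZMod 2) (LinearMap.range syndrome) =
      (minpoly (ZMod 2) β).natDegree := by
    have integral : IsIntegral (ZMod 2) β := isIntegral_of_isOfFinOrder hβ
    rw [Fintype.range_linearCombination, span_range_pow_eq_adjoin hβ,
      ← IntermediateField.adjoin_simple_toSubalgebra_of_isAlgebraic integral.isAlgebraic]
    exact IntermediateField.adjoin.finrank integral
  have rank_nullity := syndrome.finrank_range_add_finrank_ker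
  rw [ker_syndrome, finrank_range, Module.finrank_fin_fun] at rank_nullity
  rw [add_comm, rank_nullity]

lemma three_le_hammingNorm_of_mem_BCHCode_one {c : Fin (orderOf β) → ZMod 2}
    (hc : c ∈ BCHCode (orderOf β) β {1}) (hc0 : c ≠ 0) : 3 ≤ hammingNorm c := by
  refine three_le_hammingNorm_of_sum_smul_eq_zero ?_ ?_ hc0 (mem_BCHCode_one.mp hc)
  · exact fun i j h ↦ Fin.ext (pow_injOn_Iio_orderOf i.2 j.2 h)
  · rintro i hi
    obtain rfl := eq_zero_of_pow_eq_zero hi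
    exact absurd i.2 (by simp)

end BCHCode

lemma sum_range_three_choose_succ_le (n : ℕ) :
    ∑ i ∈ range 3, (n + 1).choose i ≤ 2 * (n + 1) ^ 2 := by
  have choose_two_le : (n + 1).choose 2 ≤ (n + 1) * n :=
    (Nat.choose_two_right _).trans_le (Nat.div_le_self _ _)
  simp only [sum_range_succ, sum_range_zero, Nat.choose_zero_right, Nat.choose_one_right]
  nlinarith

lemma two_mul_sq_lt_sum_range_three_choose {a n : ℕ} (h : 2 * a ≤ n) :
    2 * a ^ 2 < ∑ i ∈ range 3, (n + 1).choose i := by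
  have choose_two : a * (2 * a + 1) ≤ (n + 1).choose 2 := by
    rw [Nat.choose_two_right, Nat.le_div_iff_mul_le two_pos, Nat.add_sub_cancel]
    nlinarith
  simp only [sum_range_succ, sum_range_zero, Nat.choose_zero_right, Nat.choose_one_right]
  nlinarith

lemma natDegree_minpoly_eq_finrank_of_two_pow_lt_sum_choose {F : Type*} [Field F]
    [Algebra (ZMod 2) F] [Finite F] {β : F}
    (hβ : 2 ^ (Module.finrank (ZMod 2) F + 1) < ∑ i ∈ range 3, (orderOf β + 1).choose i) :
    (minpoly (ZMod 2) β).natDegree = Module.finrank (ZMod 2) F := by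
  apply (Field.primitive_element_iff_minpoly_natDegree_eq (ZMod 2) β).mp
  apply adjoin_simple_eq_top_of_card_lt
  rw [Module.natCard_eq_pow_finrank (K := ZMod 2), Nat.card_zmod]
  have := sum_range_three_choose_succ_le (orderOf β)
  omega

lemma orderOf_pow_two_pow_add_one {G : Type*} [Monoid G] {α : G} {s : ℕ}
    (hα : orderOf α = 2 ^ (4 * s) - 1) :
    orderOf (α ^ (2 ^ s + 1)) = (2 ^ (2 * s) + 1) * (2 ^ s - 1) := by
  have factorization :
      2 ^ (4 * s) - 1 = (2 ^ (2 * s) + 1) * (2 ^ s - 1) * (2 ^ s + 1) := by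
    calc 2 ^ (4 * s) - 1 = (2 ^ (2 * s)) ^ 2 - 1 ^ 2 := by rw [← pow_mul]; ring_nf
      _ = (2 ^ (2 * s) + 1) * ((2 ^ s) ^ 2 - 1 ^ 2) := by
        rw [Nat.sq_sub_sq, ← pow_mul, mul_comm s, one_pow]
      _ = _ := by rw [Nat.sq_sub_sq]; ring
  rw [orderOf_pow_of_dvd (by positivity) (hα ▸ factorization ▸ dvd_mul_left _ _), hα,
    factorization, Nat.mul_div_cancel _ (by positivity)]

lemma two_pow_lt_sum_range_three_choose {s : ℕ} (hs : 2 ≤ s) :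
    2 ^ (4 * s + 1) < ∑ i ∈ range 3, ((2 ^ (2 * s) + 1) * (2 ^ s - 1) + 1).choose i := by
  have four_le : 2 ^ 2 ≤ 2 ^ s := Nat.pow_le_pow_right two_pos hs
  have length_ge : 2 * 2 ^ (2 * s) ≤ (2 ^ (2 * s) + 1) * (2 ^ s - 1) := by
    rw [mul_comm]
    gcongr <;> omega
  calc 2 ^ (4 * s + 1) = 2 * (2 ^ (2 * s)) ^ 2 := by ring
    _ < _ := two_mul_sq_lt_sum_range_three_choose length_ge

theorem stmt_4_general {F : Type} [Field F] [Algebra (ZMod 2) F] [Finite F] {m n : ℕ} {β : F}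
    (hm : Module.finrank (ZMod 2) F = m) (hn : orderOf β = n)
    (hpacking : 2 ^ (m + 1) < ∑ i ∈ range 3, (n + 1).choose i) :
    Module.finrank (ZMod 2) (extendedCode (BCHCode n β {1})) = n - m ∧
    minDist (extendedCode (BCHCode n β {1})) = 4 ∧
    ∀ D : Submodule (ZMod 2) (Fin (n + 1) → ZMod 2),
      Module.finrank (ZMod 2) D = n - m → minDist D ≤ 4 := by
  subst hm hn
  have hβ : IsOfFinOrder β := by
    by_contra order_infinite
    simp [orderOf_eq_zero order_infinite, sum_range_succ] at hpacking
  have dim_add := finrank_BCHCode_one_add_natDegree_minpoly hβ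
  rw [natDegree_minpoly_eq_finrank_of_two_pow_lt_sum_choose hpacking, ← finrank_extendedCode]
    at dim_add
  refine ⟨by omega, ?_, fun D hD ↦ ?_⟩
  · refine minDist_eq_two_mul_of_finrank_add_eq (t := 2) (by omega) hpacking ?_
    exact add_one_le_hammingNorm_of_mem_extendedCode (d := 3) (by decide)
      fun _ ↦ three_le_hammingNorm_of_mem_BCHCode_one
  · exact minDist_le_two_mul_of_finrank_add_eq (t := 2) (by omega) hpacking

theorem stmt_4 (s : ℕ) (hs : 2 ≤ s) (n : ℕ) (hn : n = (2 ^ (2 * s) + 1) * (2 ^ s - 1))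
    (α : GaloisField 2 (4 * s)) (hα : orderOf α = 2 ^ (4 * s) - 1)
    (β : GaloisField 2 (4 * s)) (hβ : β = α ^ (2 ^ s + 1)) :
    Module.finrank (ZMod 2) (extendedCode (BCHCode n β {1})) = n - 4 * s ∧
    minDist (extendedCode (BCHCode n β {1})) = 4 ∧
    ∀ D : Submodule (ZMod 2) (Fin (n + 1) → ZMod 2),
      Module.finrank (ZMod 2) D = n - 4 * s → minDist D ≤ 4 := by
  subst hn hβ
  exact stmt_4_general (GaloisField.finrank 2 (by omega)) (orderOf_pow_two_pow_add_one hα)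
    (two_pow_lt_sum_range_three_choose hs)
end

section
/- Let s ≥ 2. The dual of the extended code of C_{(2,n,3,1)} has dimension 4s + 1 and minimum distance n + 1 − 2^{3s−1}; its weight distribution is: exactly 1 codeword of weight 0, exactly n codewords of weight n + 1 − 2^{3s−1}, exactly 2^{4s} − 1 − n codewords of weight 2^{3s−1} − 2^{2s−1}, exactly 2^{4s} − 1 − n codewords of weight n + 1 − 2^{3s−1} + 2^{2s−1}, exactly n codewords of weight 2^{3s−1}, exactly 1 codeword of weight n + 1, and no codewords of any other weight. -/
open Finset

/-!
Write `q = 2 ^ s`, `F = GF(q ^ 4)`, and let `U` be the group of `n`-th roots of unity, of index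
`q + 1` in `Fˣ`. By Delsarte's theorem the words of `E` are `(Tr (a * β ^ i) + b)_{i < n}` followed
by `b`, so their weights are governed by the Gauss periods `T a = ∑ u ∈ U, (-1) ^ Tr (a * u)`.

The sum of `(-1) ^ Tr (a * x ^ (q + 1))` over `x ∈ F` is `1 + (q + 1) * T a`. It is the sum of a
quadratic form which is nondegenerate for `a ≠ 0` outside `U`, so its square is `q ^ 4`, and being
`1` modulo `q + 1` it equals `q ^ 2`; hence `T a = q - 1` there. On `U` the period is constant, and
its value follows from `∑ a, T a = 0`. Thus `T` takes three values, each giving, with `b = 0` and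
`b = 1`, two complementary weights.
-/

section SignCharacter

/-- The sign character `b ↦ (-1) ^ b` of `GF(2)`, with integer values. -/
def signChar : AddChar (ZMod 2) ℤ :=
  AddChar.zmodChar 2 (ζ := -1) (by norm_num)

lemma signChar_one : signChar 1 = -1 := rfl

lemma signChar_mul_self (b : ZMod 2) : signChar b * signChar b = 1 := by
  rw [← AddChar.map_add_eq_mul, CharTwo.add_self_eq_zero, AddChar.map_zero_eq_one]

lemma two_mul_ite_ne_zero (b : ZMod 2) :
    2 * (if b ≠ 0 then 1 else 0 : ℤ) = 1 - signChar b := by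
  revert b
  decide

lemma two_mul_hammingNorm {ι : Type*} [Fintype ι] (c : ι → ZMod 2) :
    2 * (hammingNorm c : ℤ) = Fintype.card ι - ∑ i, signChar (c i) := by
  rw [hammingNorm, ← Finset.sum_boole, mul_sum, sum_congr rfl fun i _ => two_mul_ite_ne_zero (c i),
    sum_sub_distrib, sum_const, card_univ, nsmul_one]

end SignCharacter

section TraceSign

variable (F : Type*) [Field F] [Algebra (ZMod 2) F]

/-- The canonical additive character `x ↦ (-1) ^ Tr x` of a finite field of characteristic two,
with integer values. -/
noncomputable def traceSign : AddChar F ℤ :=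
  signChar.compAddMonoidHom (Algebra.trace (ZMod 2) F).toAddMonoidHom

variable {F}

lemma traceSign_apply (x : F) : traceSign F x = signChar (Algebra.trace (ZMod 2) F x) := rfl

lemma traceSign_mul_self (x : F) : traceSign F x * traceSign F x = 1 :=
  signChar_mul_self _

variable [Finite F]

lemma traceSign_pow_two_pow (x : F) (k : ℕ) : traceSign F (x ^ 2 ^ k) = traceSign F x := by
  have hfrob := Algebra.trace_eq_of_algEquiv
    (FiniteField.frobeniusAlgEquivOfAlgebraic (ZMod 2) F ^ k) x
  rw [AlgEquiv.coe_pow, FiniteField.coe_frobeniusAlgEquivOfAlgebraic_iterate, ZMod.card] at hfrob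
  rw [traceSign_apply, hfrob, traceSign_apply]

lemma isPrimitive_traceSign : (traceSign F).IsPrimitive := by
  obtain ⟨x, hx⟩ := Algebra.trace_surjective (ZMod 2) F 1
  refine AddChar.IsPrimitive.of_ne_one (AddChar.ne_one_iff.2 ⟨x, ?_⟩)
  rw [traceSign_apply, hx, signChar_one]
  norm_num

lemma traceSign_mul_traceSign_add (s : ℕ) (a x z : F) :
    traceSign F (a * x ^ (2 ^ s + 1)) * traceSign F (a * (x + z) ^ (2 ^ s + 1)) =
      traceSign F (a * z ^ (2 ^ s + 1)) *
        traceSign F (x ^ 2 ^ s * (a * z + (a * z ^ 2 ^ s) ^ 2 ^ s)) := by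
  have : CharP F 2 := (Algebra.charP_iff (ZMod 2) F 2).1 inferInstance
  have hadjoint : traceSign F (x ^ 2 ^ s * (a * z ^ 2 ^ s) ^ 2 ^ s) =
      traceSign F (x * (a * z ^ 2 ^ s)) := by
    rw [← mul_pow, traceSign_pow_two_pow]
  have hexpand : a * (x + z) ^ (2 ^ s + 1) = a * x ^ (2 ^ s + 1) +
      (a * z ^ (2 ^ s + 1) + (x ^ 2 ^ s * (a * z) + x * (a * z ^ 2 ^ s))) := by
    rw [pow_succ, add_pow_char_pow]
    ring
  rw [hexpand, mul_add (x ^ 2 ^ s)]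
  simp only [AddChar.map_add_eq_mul]
  rw [hadjoint, ← mul_assoc, traceSign_mul_self, one_mul]

end TraceSign

section QuadraticSum

variable {F : Type*} [Field F] [Fintype F] [Algebra (ZMod 2) F]

lemma sum_traceSign_pow_mul [DecidableEq F] (s : ℕ) (c : F) :
    ∑ x : F, traceSign F (x ^ 2 ^ s * c) = if c = 0 then Fintype.card F else 0 := by
  have : CharP F 2 := (Algebra.charP_iff (ZMod 2) F 2).1 inferInstance
  rw [← AddChar.sum_mulShift c isPrimitive_traceSign]
  exact (iterateFrobeniusEquiv F 2 s).toEquiv.sum_comp fun x => traceSign F (x * c)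

/-- Squaring the sum and completing differences leaves a linear character sum for each shift `z`,
which survives only for `z` in the radical of the polar form of `x ↦ Tr (a * x ^ (2 ^ s + 1))`. -/
lemma sq_sum_traceSign_mul_pow (s : ℕ) {a : F}
    (hradical : ∀ z, a * z + (a * z ^ 2 ^ s) ^ 2 ^ s = 0 → z = 0) :
    (∑ x : F, traceSign F (a * x ^ (2 ^ s + 1))) ^ 2 = Fintype.card F := by
  classical
  set Q : F → ℤ := fun x => traceSign F (a * x ^ (2 ^ s + 1)) with hQ
  calc (∑ x, Q x) ^ 2
      = ∑ x, ∑ z, Q x * Q (x + z) := by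
        rw [sq, sum_mul_sum]
        exact sum_congr rfl fun x _ => (Equiv.sum_comp (Equiv.addLeft x) fun y => Q x * Q y).symm
    _ = ∑ z, Q z * ∑ x, traceSign F (x ^ 2 ^ s * (a * z + (a * z ^ 2 ^ s) ^ 2 ^ s)) := by
        rw [sum_comm]
        simp only [hQ, traceSign_mul_traceSign_add, mul_sum]
    _ = Q 0 * Fintype.card F := by
        simp only [sum_traceSign_pow_mul]
        rw [sum_eq_single 0 (fun z _ hz => by rw [if_neg (mt (hradical z) hz), Nat.cast_zero,
          mul_zero]) (by simp)]
        simp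
    _ = Fintype.card F := by simp [hQ]

lemma eq_zero_of_polar_eq_zero {s n : ℕ} (hcard : Fintype.card F = (2 ^ s + 1) * n + 1)
    (hdvd : 2 ^ s - 1 ∣ n) {a : F} (ha : a ≠ 0) (han : a ^ n ≠ 1) {z : F}
    (hz : a * z + (a * z ^ 2 ^ s) ^ 2 ^ s = 0) : z = 0 := by
  have : CharP F 2 := (Algebra.charP_iff (ZMod 2) F 2).1 inferInstance
  by_contra hz0
  obtain ⟨r, hr⟩ : ∃ r, 2 ^ s = r + 1 := Nat.exists_eq_add_one.2 (by positivity)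
  have hnorm : (a * z ^ (2 ^ s + 1)) ^ (2 ^ s - 1) = 1 := by
    refine mul_left_cancel₀ (mul_ne_zero ha hz0) ?_
    calc a * z * (a * z ^ (2 ^ s + 1)) ^ (2 ^ s - 1)
        = (a * z ^ 2 ^ s) ^ 2 ^ s := by rw [hr, Nat.add_sub_cancel]; ring
      _ = a * z * 1 := by rw [mul_one, CharTwo.add_eq_zero.1 hz]
  apply han
  calc a ^ n = a ^ n * z ^ (Fintype.card F - 1) := by
        rw [FiniteField.pow_card_sub_one_eq_one z hz0, mul_one]
    _ = (a * z ^ (2 ^ s + 1)) ^ n := by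
        rw [hcard, Nat.add_sub_cancel, mul_pow, pow_mul]
    _ = 1 := by
        obtain ⟨k, rfl⟩ := hdvd
        rw [pow_mul, hnorm, one_pow]

end QuadraticSum

section PowerSum

variable {F M : Type*} [Field F] [Fintype F] [AddCommMonoid M]

lemma card_filter_pow_eq [DecidableEq F] {k n : ℕ} (hcard : Fintype.card F = k * n + 1) {u : F}
    (hu : u ^ n = 1) : #{x : F | x ^ k = u} = k := by
  have hkn : 0 < k * n := by have := Fintype.one_lt_card (α := F); lia
  have hk : 0 < k := Nat.pos_of_mul_pos_right hkn
  have hn : 0 < n := Nat.pos_of_mul_pos_left hkn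
  have : NeZero n := ⟨hn.ne'⟩
  have hu0 : u ≠ 0 := by rintro rfl; simp [hn.ne'] at hu
  obtain ⟨g, hg⟩ := IsCyclic.exists_ofOrder_eq_natCard (α := Fˣ)
  have hgprim : IsPrimitiveRoot (g : F) (k * n) := by
    rw [IsPrimitiveRoot.coe_units_iff]
    convert IsPrimitiveRoot.orderOf g
    rw [hg, Nat.card_units, Nat.card_eq_fintype_card, hcard, Nat.add_sub_cancel]
  obtain ⟨i, -, hi⟩ := (hgprim.pow hkn rfl).eq_pow_of_pow_eq_one hu
  have hkprim : IsPrimitiveRoot ((g : F) ^ n) k := hgprim.pow hkn (mul_comm k n)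
  have hroots : ({x : F | x ^ k = u} : Finset F) = (Polynomial.nthRoots k u).toFinset := by
    ext x
    simp [Polynomial.mem_nthRoots hk]
  rw [hroots, Multiset.toFinset_card_of_nodup (hkprim.nthRoots_nodup hu0), hkprim.card_nthRoots,
    if_pos ⟨(g : F) ^ i, by rw [← hi, ← pow_mul, ← pow_mul, mul_comm]⟩]

lemma sum_comp_pow {k n : ℕ} (hcard : Fintype.card F = k * n + 1) (f : F → M) :
    ∑ x, f (x ^ k) = f 0 + k • ∑ u ∈ Polynomial.nthRootsFinset n (1 : F), f u := by
  classical
  have hkn : 0 < k * n := by have := Fintype.one_lt_card (α := F); lia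
  have hk : k ≠ 0 := (Nat.pos_of_mul_pos_right hkn).ne'
  have hn : 0 < n := Nat.pos_of_mul_pos_left hkn
  have hmaps : ∀ x ∈ univ.erase (0 : F), x ^ k ∈ Polynomial.nthRootsFinset n (1 : F) := by
    intro x hx
    rw [Polynomial.mem_nthRootsFinset hn, ← pow_mul, ← Nat.add_sub_cancel (k * n) 1, ← hcard,
      FiniteField.pow_card_sub_one_eq_one x (ne_of_mem_erase hx)]
  have hfiber : ∀ u ∈ Polynomial.nthRootsFinset n (1 : F),
      ∑ x ∈ univ.erase (0 : F) with x ^ k = u, f (x ^ k) = k • f u := by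
    intro u hu
    have hu0 : u ≠ 0 := Polynomial.ne_zero_of_mem_nthRootsFinset one_ne_zero hu
    have herase : {x ∈ univ.erase (0 : F) | x ^ k = u} = ({x | x ^ k = u} : Finset F) := by
      ext x
      simp only [mem_filter, mem_erase, mem_univ, and_true, true_and, and_iff_right_iff_imp]
      rintro hx rfl
      exact hu0 (by rw [← hx, zero_pow hk])
    rw [sum_congr rfl fun x hx => by rw [(mem_filter.1 hx).2], sum_const, herase,
      card_filter_pow_eq hcard ((Polynomial.mem_nthRootsFinset hn 1).1 hu)]
  rw [← add_sum_erase _ _ (mem_univ 0), zero_pow hk, ← sum_fiberwise_of_maps_to hmaps,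
    sum_congr rfl hfiber, sum_nsmul]

lemma sum_eq_of_eq_on_nthRoots {n : ℕ} {ζ : F} (hζ : IsPrimitiveRoot ζ n) (hn : 0 < n)
    {f : F → M} {y z : M} (hy : ∀ a, a ^ n = 1 → f a = y)
    (hz : ∀ a, a ≠ 0 → a ^ n ≠ 1 → f a = z) :
    ∑ a, f a = f 0 + n • y + (Fintype.card F - 1 - n) • z := by
  classical
  set R := Polynomial.nthRootsFinset n (1 : F)
  have hR : R ⊆ univ.erase 0 := fun a ha =>
    mem_erase.2 ⟨Polynomial.ne_zero_of_mem_nthRootsFinset one_ne_zero ha, mem_univ a⟩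
  have hroots : ∑ a ∈ R, f a = n • y := by
    rw [sum_congr rfl fun a ha => hy a ((Polynomial.mem_nthRootsFinset hn 1).1 ha), sum_const,
      hζ.card_nthRootsFinset]
  have hrest : ∑ a ∈ univ.erase 0 \ R, f a = (Fintype.card F - 1 - n) • z := by
    have hconst : ∀ a ∈ univ.erase 0 \ R, f a = z := fun a ha => by
      obtain ⟨ha0, haR⟩ := mem_sdiff.1 ha
      exact hz a (ne_of_mem_erase ha0) (mt (Polynomial.mem_nthRootsFinset hn 1).2 haR)
    rw [sum_congr rfl hconst, sum_const, card_sdiff_of_subset hR, card_erase_of_mem (mem_univ 0),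
      card_univ, hζ.card_nthRootsFinset]
  rw [← add_sum_erase _ _ (mem_univ 0), ← sum_sdiff hR, hroots, hrest, add_comm (_ • z), add_assoc]

end PowerSum

section GaussPeriod

variable {F : Type*} [Field F] [Algebra (ZMod 2) F]

/-- The Gauss period of `a`: the sum of the canonical additive character over the coset `a * U` of
the group `U` of `n`-th roots of unity. -/
noncomputable def gaussPeriod (n : ℕ) (a : F) : ℤ :=
  ∑ u ∈ Polynomial.nthRootsFinset n (1 : F), traceSign F (a * u)

lemma gaussPeriod_zero {n : ℕ} {ζ : F} (hζ : IsPrimitiveRoot ζ n) :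
    gaussPeriod n (0 : F) = n := by
  simp [gaussPeriod, hζ.card_nthRootsFinset]

lemma gaussPeriod_of_pow_eq_one {n : ℕ} (hn : 0 < n) {v : F} (hv : v ^ n = 1) :
    gaussPeriod n v = gaussPeriod n (1 : F) := by
  have hv0 : v ≠ 0 := by rintro rfl; simp [hn.ne'] at hv
  unfold gaussPeriod
  refine sum_nbij' (v * ·) (v⁻¹ * ·) ?_ ?_ (fun u _ => inv_mul_cancel_left₀ hv0 u)
    (fun u _ => mul_inv_cancel_left₀ hv0 u) (fun u _ => by rw [one_mul])
  all_goals
    intro u hu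
    rw [Polynomial.mem_nthRootsFinset hn] at hu ⊢
    simp [mul_pow, hv, hu]

variable [Fintype F]

lemma sum_gaussPeriod (n : ℕ) : ∑ a : F, gaussPeriod n a = 0 := by
  classical
  simp only [gaussPeriod]
  rw [sum_comm]
  refine sum_eq_zero fun u hu => ?_
  rw [AddChar.sum_mulShift u isPrimitive_traceSign,
    if_neg (Polynomial.ne_zero_of_mem_nthRootsFinset one_ne_zero hu), Nat.cast_zero]

lemma sum_traceSign_mul_pow {k n : ℕ} (hcard : Fintype.card F = k * n + 1) (a : F) :
    ∑ x : F, traceSign F (a * x ^ k) = 1 + k * gaussPeriod n a := by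
  rw [sum_comp_pow hcard fun x => traceSign F (a * x), gaussPeriod, mul_zero,
    AddChar.map_zero_eq_one, nsmul_eq_mul]

/-- Of the two square roots `± (-q) ^ m` of `q ^ (2 * m)`, only one is `1` modulo `q + 1`. -/
lemma eq_neg_pow_sub_one_of_sq_eq {q t : ℤ} {m : ℕ} (hq : 2 ≤ q)
    (h : (1 + (q + 1) * t) ^ 2 = q ^ (2 * m)) : (q + 1) * t = (-q) ^ m - 1 := by
  rw [← (even_two_mul m).neg_pow q, mul_comm 2 m, pow_mul, sq_eq_sq_iff_eq_or_eq_neg] at h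
  rcases h with h | h
  · linear_combination h
  · have hmod : q + 1 ∣ (-q) ^ m - 1 := by
      have := sub_dvd_pow_sub_pow (-q) 1 m
      rwa [one_pow, ← neg_add', neg_dvd] at this
    obtain ⟨r, hr⟩ := hmod
    have htwo : q + 1 ∣ 2 := ⟨-(t + r), by linear_combination h - hr⟩
    have := Int.le_of_dvd two_pos htwo
    lia

variable {s m n : ℕ}

lemma two_pow_sub_one_dvd_of_mul_add_one_eq (hn : (2 ^ s + 1) * n + 1 = (2 ^ s) ^ (2 * m)) :
    2 ^ s - 1 ∣ n := by
  refine Nat.dvd_of_mul_dvd_mul_left (Nat.succ_pos (2 ^ s)) ?_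
  rw [← Nat.add_sub_cancel (_ * n) 1, Nat.succ_eq_add_one, hn, pow_mul]
  simpa [← Nat.sq_sub_sq] using Nat.sub_dvd_pow_sub_pow ((2 ^ s) ^ 2) 1 m

lemma mul_gaussPeriod_of_pow_ne_one (hs : s ≠ 0) (hcard : Fintype.card F = (2 ^ s) ^ (2 * m))
    (hn : (2 ^ s + 1) * n + 1 = (2 ^ s) ^ (2 * m)) {a : F} (ha : a ≠ 0) (han : a ^ n ≠ 1) :
    ((2 ^ s + 1) * gaussPeriod n a : ℤ) = (-2 ^ s) ^ m - 1 := by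
  have hcard' := hcard.trans hn.symm
  have hdvd := two_pow_sub_one_dvd_of_mul_add_one_eq hn
  have hsq := sq_sum_traceSign_mul_pow s fun z => eq_zero_of_polar_eq_zero hcard' hdvd ha han
  rw [sum_traceSign_mul_pow hcard', hcard] at hsq
  refine eq_neg_pow_sub_one_of_sq_eq ?_ (by exact_mod_cast hsq)
  exact_mod_cast Nat.le_self_pow hs 2

lemma mul_gaussPeriod_of_pow_eq_one (hs : s ≠ 0) (hcard : Fintype.card F = (2 ^ s) ^ (2 * m))
    (hn : (2 ^ s + 1) * n + 1 = (2 ^ s) ^ (2 * m)) (hn0 : 0 < n) {ζ : F}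
    (hζ : IsPrimitiveRoot ζ n) {a : F} (ha : a ^ n = 1) :
    ((2 ^ s + 1) * gaussPeriod n a : ℤ) = (-2 ^ s) ^ (m + 1) - 1 := by
  have htotal := sum_eq_of_eq_on_nthRoots hζ hn0
    (f := fun a : F => ((2 ^ s + 1) * gaussPeriod n a : ℤ))
    (fun a ha => congrArg _ (gaussPeriod_of_pow_eq_one hn0 ha))
    (fun a => mul_gaussPeriod_of_pow_ne_one hs hcard hn)
  have hrest : Fintype.card F - 1 - n = 2 ^ s * n := by
    rw [hcard, ← hn, Nat.add_sub_cancel, add_one_mul, Nat.add_sub_cancel]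
  rw [← mul_sum, sum_gaussPeriod, gaussPeriod_zero hζ, hrest] at htotal
  rw [gaussPeriod_of_pow_eq_one hn0 ha]
  have hn0' : (n : ℤ) ≠ 0 := by exact_mod_cast hn0.ne'
  refine mul_left_cancel₀ hn0' ?_
  simp only [nsmul_eq_mul] at htotal
  push_cast at htotal
  linear_combination -htotal

end GaussPeriod

section Delsarte

/-- Delsarte's theorem: the linear functionals vanishing on the kernel of `c ↦ ∑ i, c i • v i` are
those factoring through it, and the trace form represents every functional on `F`. -/
lemma forall_sum_mul_eq_zero_iff_exists_trace {K F ι : Type*} [Field K] [Field F] [Algebra K F]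
    [FiniteDimensional K F] [Algebra.IsSeparable K F] [Fintype ι] (v : ι → F) (b : ι → K) :
    (∀ c : ι → K, ∑ i, c i • v i = 0 → ∑ i, b i * c i = 0) ↔
      ∃ a : F, ∀ i, b i = Algebra.trace K F (a * v i) := by
  classical
  constructor
  · intro h
    set φ := Fintype.linearCombination K b
    have hφ : φ ∈ (LinearMap.ker (Fintype.linearCombination K v)).dualAnnihilator := by
      refine (Submodule.mem_dualAnnihilator φ).2 fun c hc => ?_
      simpa [φ, Fintype.linearCombination_apply, mul_comm] using h c hc
    rw [← LinearMap.range_dualMap_eq_dualAnnihilator_ker] at hφ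
    obtain ⟨g, hg⟩ := hφ
    obtain ⟨a, rfl⟩ :=
      ((Algebra.traceForm K F).toDual (traceForm_nondegenerate K F)).surjective g
    refine ⟨a, fun i => ?_⟩
    simpa [φ, LinearMap.BilinForm.toDual_def] using (LinearMap.congr_fun hg (Pi.single i 1)).symm
  · rintro ⟨a, ha⟩ c hc
    calc ∑ i, b i * c i = Algebra.trace K F (a * ∑ i, c i • v i) := by
          simp [ha, mul_sum, mul_comm]
      _ = 0 := by rw [hc, mul_zero, map_zero]

lemma mem_dualCode_extendedCode {N : ℕ} {C : Submodule (ZMod 2) (Fin N → ZMod 2)}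
    {e : Fin (N + 1) → ZMod 2} :
    e ∈ dualCode (extendedCode C) ↔
      (fun i : Fin N => e i.castSucc + e (Fin.last N)) ∈ dualCode C := by
  have hpair : ∀ c : Fin N → ZMod 2, ∑ j, e j * extendMap N c j =
      ∑ i, (e i.castSucc + e (Fin.last N)) * c i := fun c => by
    simp [Fin.sum_univ_castSucc, extendMap, add_mul, sum_add_distrib, mul_sum]
  constructor
  · intro h c hc
    rw [← hpair]
    exact h _ ⟨c, hc, rfl⟩
  · rintro h _ ⟨c, hc, rfl⟩
    rw [hpair]
    exact h c hc

lemma mem_dualCode_BCHCode_singleton {F : Type} [Field F] [Finite F] [Algebra (ZMod 2) F] {n : ℕ}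
    {β : F} {k : ℕ} {b : Fin n → ZMod 2} :
    b ∈ dualCode (BCHCode n β {k}) ↔
      ∃ a : F, ∀ i : Fin n, b i = Algebra.trace (ZMod 2) F (a * β ^ (k * (i : ℕ))) := by
  rw [← forall_sum_mul_eq_zero_iff_exists_trace]
  simp [dualCode, BCHCode]

end Delsarte

section WeightCount

variable {N : ℕ} {C : Submodule (ZMod 2) (Fin N → ZMod 2)}

lemma weightCount_range {V : Type*} [AddCommGroup V] [Module (ZMod 2) V] [Fintype V]
    {f : V →ₗ[ZMod 2] (Fin N → ZMod 2)} (hf : Function.Injective f) (w : ℕ) :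
    weightCount (LinearMap.range f) w = #{v | hammingNorm (f v) = w} := by
  have himage : {c | c ∈ LinearMap.range f ∧ hammingNorm c = w} =
      f '' ({v | hammingNorm (f v) = w} : Finset V) := by
    ext c
    constructor
    · rintro ⟨⟨v, rfl⟩, hv⟩
      exact ⟨v, by simpa using hv, rfl⟩
    · rintro ⟨v, hv, rfl⟩
      exact ⟨⟨v, rfl⟩, by simpa using hv⟩
  rw [weightCount, himage, Set.ncard_image_of_injective _ hf, Set.ncard_coe_finset]

lemma exists_mem_of_weightCount_ne_zero {w : ℕ} (hw : weightCount C w ≠ 0) :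
    ∃ c ∈ C, hammingNorm c = w :=
  Set.nonempty_of_ncard_ne_zero hw

lemma weightCount_hammingNorm_ne_zero {c : Fin N → ZMod 2} (hc : c ∈ C) :
    weightCount C (hammingNorm c) ≠ 0 :=
  Set.ncard_ne_zero_of_mem (a := c) ⟨hc, rfl⟩

lemma minDist_eq_of_weightCount {d : ℕ} (hd : 0 < d) (hd' : weightCount C d ≠ 0)
    (hlt : ∀ w, 0 < w → w < d → weightCount C w = 0) : minDist C = d := by
  obtain ⟨c, hcC, hc⟩ := exists_mem_of_weightCount_ne_zero hd'
  have hmem : d ∈ {w | ∃ c ∈ C, c ≠ 0 ∧ hammingNorm c = w} :=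
    ⟨c, hcC, hammingNorm_pos_iff.1 (hc ▸ hd), hc⟩
  refine le_antisymm (Nat.sInf_le hmem) (le_csInf ⟨d, hmem⟩ ?_)
  rintro _ ⟨c, hcC, hc0, rfl⟩
  by_contra! hcd
  exact weightCount_hammingNorm_ne_zero hcC (hlt _ (hammingNorm_pos_iff.2 hc0) hcd)

end WeightCount

section ExtendedTraceCode

variable {F : Type*} [Field F] [Algebra (ZMod 2) F]

/-- The encoder `(a, b) ↦ (Tr (a * β ^ i) + b)_{i < n} ∥ b`, which parametrizes the dual of the
extended code of the cyclic code with zero `β`. -/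
noncomputable def extendedTraceMap (n : ℕ) (β : F) :
    F × ZMod 2 →ₗ[ZMod 2] (Fin (n + 1) → ZMod 2) :=
  LinearMap.pi (Fin.snoc (α := fun _ => F × ZMod 2 →ₗ[ZMod 2] ZMod 2)
    (fun i : Fin n => (Algebra.trace (ZMod 2) F ∘ₗ LinearMap.mulRight (ZMod 2) (β ^ (i : ℕ))).coprod
      LinearMap.id)
    (LinearMap.snd (ZMod 2) F (ZMod 2)))

variable {n : ℕ} {β : F}

lemma extendedTraceMap_castSucc (p : F × ZMod 2) (i : Fin n) :
    extendedTraceMap n β p i.castSucc =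
      Algebra.trace (ZMod 2) F (p.1 * β ^ (i : ℕ)) + p.2 := by
  simp [extendedTraceMap]

lemma extendedTraceMap_last (p : F × ZMod 2) : extendedTraceMap n β p (Fin.last n) = p.2 := by
  simp [extendedTraceMap]

lemma dualCode_extendedCode_BCHCode_one {F : Type} [Field F] [Finite F] [Algebra (ZMod 2) F]
    (n : ℕ) (β : F) :
    dualCode (extendedCode (BCHCode n β {1})) = LinearMap.range (extendedTraceMap n β) := by
  ext e
  rw [mem_dualCode_extendedCode, mem_dualCode_BCHCode_singleton, LinearMap.mem_range, Prod.exists]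
  refine exists_congr fun a => ⟨fun h => ⟨e (Fin.last n), ?_⟩, ?_⟩
  · refine funext (Fin.lastCases (extendedTraceMap_last _) fun i => ?_)
    rw [extendedTraceMap_castSucc, ← one_mul (i : ℕ), ← h, add_assoc, CharTwo.add_self_eq_zero,
      add_zero]
  · rintro ⟨b, rfl⟩ i
    rw [extendedTraceMap_castSucc, extendedTraceMap_last, add_assoc, CharTwo.add_self_eq_zero,
      add_zero, one_mul]

lemma sum_pow_eq_sum_nthRootsFinset {R M : Type*} [CommRing R] [IsDomain R] [AddCommMonoid M]
    {n : ℕ} {ζ : R} (hζ : IsPrimitiveRoot ζ n) (hn : 0 < n) (f : R → M) :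
    ∑ i : Fin n, f (ζ ^ (i : ℕ)) = ∑ u ∈ Polynomial.nthRootsFinset n (1 : R), f u := by
  have : NeZero n := ⟨hn.ne'⟩
  refine sum_nbij (fun i : Fin n => ζ ^ (i : ℕ)) (fun i _ => ?_)
    (fun i _ j _ hij => Fin.ext (hζ.pow_inj i.2 j.2 hij)) (fun u hu => ?_) (fun _ _ => rfl)
  · rw [Polynomial.mem_nthRootsFinset hn, ← pow_mul, mul_comm, pow_mul, hζ.pow_eq_one, one_pow]
  · obtain ⟨i, hi, rfl⟩ :=
      hζ.eq_pow_of_pow_eq_one ((Polynomial.mem_nthRootsFinset hn 1).1 hu)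
    exact ⟨⟨i, hi⟩, mem_univ _, rfl⟩

lemma two_mul_hammingNorm_extendedTraceMap (hβ : IsPrimitiveRoot β n) (hn : 0 < n)
    (p : F × ZMod 2) :
    2 * (hammingNorm (extendedTraceMap n β p) : ℤ) =
      n + 1 - signChar p.2 * (gaussPeriod n p.1 + 1) := by
  have hsum : ∑ i : Fin n, signChar (Algebra.trace (ZMod 2) F (p.1 * β ^ (i : ℕ))) =
      gaussPeriod n p.1 :=
    sum_pow_eq_sum_nthRootsFinset hβ hn fun u => traceSign F (p.1 * u)
  rw [two_mul_hammingNorm, Fin.sum_univ_castSucc]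
  simp only [extendedTraceMap_castSucc, extendedTraceMap_last, AddChar.map_add_eq_mul, ← sum_mul,
    hsum, Fintype.card_fin]
  push_cast
  ring

lemma two_mul_hammingNorm_extendedTraceMap_zero (hβ : IsPrimitiveRoot β n) (hn : 0 < n) (a : F) :
    2 * (hammingNorm (extendedTraceMap n β (a, 0)) : ℤ) = n - gaussPeriod n a := by
  rw [two_mul_hammingNorm_extendedTraceMap hβ hn, AddChar.map_zero_eq_one]
  ring

lemma hammingNorm_extendedTraceMap_one (hβ : IsPrimitiveRoot β n) (hn : 0 < n) (a : F) :
    hammingNorm (extendedTraceMap n β (a, 1)) =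
      n + 1 - hammingNorm (extendedTraceMap n β (a, 0)) := by
  have hzero := two_mul_hammingNorm_extendedTraceMap_zero hβ hn a
  have hone := two_mul_hammingNorm_extendedTraceMap hβ hn (a, 1)
  rw [signChar_one] at hone
  lia

lemma injective_extendedTraceMap (hβ : IsPrimitiveRoot β n) (hn : 0 < n)
    (hperiod : ∀ a : F, a ≠ 0 → gaussPeriod n a ≠ n) :
    Function.Injective (extendedTraceMap n β) := by
  refine (injective_iff_map_eq_zero _).2 fun ⟨a, b⟩ hab => ?_
  obtain rfl : b = 0 := by simpa [extendedTraceMap_last] using congrFun hab (Fin.last n)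
  have hnorm := two_mul_hammingNorm_extendedTraceMap_zero hβ hn a
  rw [hab, hammingNorm_zero] at hnorm
  have ha : a = 0 := by
    by_contra ha
    exact hperiod a ha (by lia)
  rw [ha, Prod.mk_zero_zero]

lemma weightCount_range_extendedTraceMap [Fintype F] {A B : ℕ} (hβ : IsPrimitiveRoot β n)
    (hn : 0 < n) (hinj : Function.Injective (extendedTraceMap n β))
    (hA : ∀ a : F, a ^ n = 1 → (2 * A : ℤ) = n - gaussPeriod n a)
    (hB : ∀ a : F, a ≠ 0 → a ^ n ≠ 1 → (2 * B : ℤ) = n - gaussPeriod n a) (w : ℕ) :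
    weightCount (LinearMap.range (extendedTraceMap n β)) w =
      ((if 0 = w then 1 else 0) + if n + 1 = w then 1 else 0) +
      n * ((if A = w then 1 else 0) + if n + 1 - A = w then 1 else 0) +
      (Fintype.card F - 1 - n) * ((if B = w then 1 else 0) + if n + 1 - B = w then 1 else 0) := by
  have hzero := two_mul_hammingNorm_extendedTraceMap_zero hβ hn
  have hone := hammingNorm_extendedTraceMap_one hβ hn
  have hnormA : ∀ a : F, a ^ n = 1 → hammingNorm (extendedTraceMap n β (a, 0)) = A :=
    fun a ha => by have := hzero a; have := hA a ha; lia
  have hnormB : ∀ a : F, a ≠ 0 → a ^ n ≠ 1 → hammingNorm (extendedTraceMap n β (a, 0)) = B :=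
    fun a ha han => by have := hzero a; have := hB a ha han; lia
  have hpair : ∀ a : F, ∑ b, (if hammingNorm (extendedTraceMap n β (a, b)) = w then 1 else 0) =
      (if hammingNorm (extendedTraceMap n β (a, 0)) = w then 1 else 0) +
        if n + 1 - hammingNorm (extendedTraceMap n β (a, 0)) = w then 1 else 0 := fun a => by
    rw [← hone a]
    exact Fin.sum_univ_two _
  rw [weightCount_range hinj, card_filter, Fintype.sum_prod_type]
  simp only [hpair]
  rw [sum_eq_of_eq_on_nthRoots hβ hn (fun a ha => by rw [hnormA a ha])
    (fun a ha han => by rw [hnormB a ha han])]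
  simp only [Prod.mk_zero_zero, map_zero, hammingNorm_zero, Nat.sub_zero, smul_eq_mul]

end ExtendedTraceCode

section Parameters

variable {s n : ℕ}

lemma two_pow_add_one_mul_length (hn : n = (2 ^ (2 * s) + 1) * (2 ^ s - 1)) :
    (2 ^ s + 1) * n + 1 = (2 ^ s) ^ (2 * 2) := by
  obtain ⟨r, hr⟩ : ∃ r, 2 ^ s = r + 1 := Nat.exists_eq_add_one.2 (by positivity)
  rw [hn, mul_comm 2 s, pow_mul, hr, Nat.add_sub_cancel]
  ring

lemma length_pos (hs : s ≠ 0) (hn : n = (2 ^ (2 * s) + 1) * (2 ^ s - 1)) : 0 < n := by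
  rw [hn]
  exact Nat.mul_pos (Nat.succ_pos _) (Nat.sub_pos_of_lt (Nat.one_lt_two_pow hs))

lemma two_mul_two_pow_mul_sub_one {k : ℕ} (hs : s ≠ 0) (hk : k ≠ 0) :
    2 * 2 ^ (k * s - 1) = (2 ^ s) ^ k := by
  rw [mul_pow_sub_one (mul_ne_zero hk hs), mul_comm k s, pow_mul]

lemma two_pow_two_mul_sub_one_le (s : ℕ) : 2 ^ (2 * s - 1) ≤ 2 ^ (3 * s - 1) :=
  Nat.pow_le_pow_right two_pos (by lia)

lemma weights_increasing (hs : 2 ≤ s) (hn : n = (2 ^ (2 * s) + 1) * (2 ^ s - 1)) :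
    0 < n + 1 - 2 ^ (3 * s - 1) ∧
    n + 1 - 2 ^ (3 * s - 1) < 2 ^ (3 * s - 1) - 2 ^ (2 * s - 1) ∧
    2 ^ (3 * s - 1) - 2 ^ (2 * s - 1) < n + 1 - 2 ^ (3 * s - 1) + 2 ^ (2 * s - 1) ∧
    n + 1 - 2 ^ (3 * s - 1) + 2 ^ (2 * s - 1) < 2 ^ (3 * s - 1) ∧
    2 ^ (3 * s - 1) < n + 1 := by
  have hs0 : s ≠ 0 := by lia
  have hq : 2 ^ 2 ≤ 2 ^ s := Nat.pow_le_pow_right two_pos hs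
  have hcube := two_mul_two_pow_mul_sub_one hs0 three_ne_zero
  have hsq := two_mul_two_pow_mul_sub_one hs0 two_ne_zero
  have hle := two_pow_two_mul_sub_one_le s
  have hlength : n + 1 + (2 ^ s) ^ 2 = (2 ^ s) ^ 3 + 2 ^ s := by
    obtain ⟨r, hr⟩ : ∃ r, 2 ^ s = r + 1 := Nat.exists_eq_add_one.2 (by positivity)
    rw [hn, mul_comm 2 s, pow_mul, hr, Nat.add_sub_cancel]
    ring
  have hsq_large : 4 * 2 ^ s ≤ (2 ^ s) ^ 2 := by nlinarith
  have hcube_large : 4 * (2 ^ s) ^ 2 ≤ (2 ^ s) ^ 3 := by nlinarith [sq_nonneg (2 ^ s)]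
  refine ⟨?_, ?_, ?_, ?_, ?_⟩ <;> lia

end Parameters

lemma finrank_range_of_injective_prod {K V W : Type*} [Field K] [Fintype K] [AddCommGroup V]
    [Module K V] [Fintype V] [AddCommGroup W] [Module K W] {f : V × K →ₗ[K] W}
    (hf : Function.Injective f) {k : ℕ} (hcard : Fintype.card V = Fintype.card K ^ k) :
    Module.finrank K (LinearMap.range f) = k + 1 := by
  have hk : Module.finrank K V = k :=
    Nat.pow_right_injective (Fintype.one_lt_card (α := K))
      (Module.card_eq_pow_finrank.symm.trans hcard)
  rw [LinearMap.finrank_range_of_inj hf, Module.finrank_prod, Module.finrank_self, hk]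

section Weights

variable {F : Type*} [Field F] [Fintype F] [Algebra (ZMod 2) F] {s n : ℕ}

lemma two_mul_weight_of_pow_eq_one (hs : s ≠ 0) (hn : n = (2 ^ (2 * s) + 1) * (2 ^ s - 1))
    (hcard : Fintype.card F = 2 ^ (4 * s)) {ζ : F} (hζ : IsPrimitiveRoot ζ n) {a : F}
    (ha : a ^ n = 1) : (2 * (2 ^ (3 * s - 1) : ℕ) : ℤ) = n - gaussPeriod n a := by
  have hlength := two_pow_add_one_mul_length hn
  have hperiod := mul_gaussPeriod_of_pow_eq_one (m := 2) hs
    (by rw [hcard, ← pow_mul, mul_comm s]) hlength (length_pos hs hn) hζ ha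
  have hcube := two_mul_two_pow_mul_sub_one hs three_ne_zero
  zify at hlength hcube
  refine mul_left_cancel₀ (by positivity : (2 ^ s + 1 : ℤ) ≠ 0) ?_
  push_cast
  linear_combination (2 ^ s + 1) * hcube - hlength + hperiod

lemma two_mul_weight_of_pow_ne_one (hs : s ≠ 0) (hn : n = (2 ^ (2 * s) + 1) * (2 ^ s - 1))
    (hcard : Fintype.card F = 2 ^ (4 * s)) {a : F} (ha : a ≠ 0) (han : a ^ n ≠ 1) :
    (2 * (2 ^ (3 * s - 1) - 2 ^ (2 * s - 1) : ℕ) : ℤ) = n - gaussPeriod n a := by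
  have hlength := two_pow_add_one_mul_length hn
  have hperiod := mul_gaussPeriod_of_pow_ne_one (m := 2) hs
    (by rw [hcard, ← pow_mul, mul_comm s]) hlength ha han
  have hcube := two_mul_two_pow_mul_sub_one hs three_ne_zero
  have hsq := two_mul_two_pow_mul_sub_one hs two_ne_zero
  zify at hlength hcube hsq
  refine mul_left_cancel₀ (by positivity : (2 ^ s + 1 : ℤ) ≠ 0) ?_
  push_cast [Nat.cast_sub (two_pow_two_mul_sub_one_le s)]
  linear_combination (2 ^ s + 1) * (hcube - hsq) - hlength + hperiod

lemma injective_extendedTraceMap_of_card (hs : s ≠ 0)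
    (hn : n = (2 ^ (2 * s) + 1) * (2 ^ s - 1)) (hcard : Fintype.card F = 2 ^ (4 * s)) {β : F}
    (hβ : IsPrimitiveRoot β n) : Function.Injective (extendedTraceMap n β) := by
  refine injective_extendedTraceMap hβ (length_pos hs hn) fun a ha hperiod => ?_
  by_cases han : a ^ n = 1
  · have hweight := two_mul_weight_of_pow_eq_one hs hn hcard hβ han
    have hpos : 0 < 2 ^ (3 * s - 1) := by positivity
    lia
  · have hweight := two_mul_weight_of_pow_ne_one hs hn hcard ha han
    have hlt : 2 ^ (2 * s - 1) < 2 ^ (3 * s - 1) := Nat.pow_lt_pow_right one_lt_two (by lia)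
    lia

lemma weightCount_range_extendedTraceMap_of_card (hs : 2 ≤ s)
    (hn : n = (2 ^ (2 * s) + 1) * (2 ^ s - 1)) (hcard : Fintype.card F = 2 ^ (4 * s)) {β : F}
    (hβ : IsPrimitiveRoot β n) (w : ℕ) :
    weightCount (LinearMap.range (extendedTraceMap n β)) w =
      ((if 0 = w then 1 else 0) + if n + 1 = w then 1 else 0) +
      n * ((if 2 ^ (3 * s - 1) = w then 1 else 0) +
        if n + 1 - 2 ^ (3 * s - 1) = w then 1 else 0) +
      (2 ^ (4 * s) - 1 - n) * ((if 2 ^ (3 * s - 1) - 2 ^ (2 * s - 1) = w then 1 else 0) +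
        if n + 1 - 2 ^ (3 * s - 1) + 2 ^ (2 * s - 1) = w then 1 else 0) := by
  have hs0 : s ≠ 0 := by lia
  have hcompl : n + 1 - (2 ^ (3 * s - 1) - 2 ^ (2 * s - 1)) =
      n + 1 - 2 ^ (3 * s - 1) + 2 ^ (2 * s - 1) := by
    have := weights_increasing hs hn
    lia
  rw [weightCount_range_extendedTraceMap hβ (length_pos hs0 hn)
    (injective_extendedTraceMap_of_card hs0 hn hcard hβ)
    (fun _ => two_mul_weight_of_pow_eq_one hs0 hn hcard hβ)
    (fun _ => two_mul_weight_of_pow_ne_one hs0 hn hcard), hcompl, hcard]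

end Weights

theorem stmt_5_general (s : ℕ) (hs : 2 ≤ s) (n : ℕ) (hn : n = (2 ^ (2 * s) + 1) * (2 ^ s - 1))
    {F : Type} [Field F] [Finite F] [Algebra (ZMod 2) F] (hcard : Nat.card F = 2 ^ (4 * s))
    (β : F) (hβ : IsPrimitiveRoot β n) (E : Submodule (ZMod 2) (Fin (n + 1) → ZMod 2))
    (hE : E = dualCode (extendedCode (BCHCode n β {1}))) :
    Module.finrank (ZMod 2) E = 4 * s + 1 ∧
    minDist E = n + 1 - 2 ^ (3 * s - 1) ∧
    weightCount E 0 = 1 ∧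
    weightCount E (n + 1 - 2 ^ (3 * s - 1)) = n ∧
    weightCount E (2 ^ (3 * s - 1) - 2 ^ (2 * s - 1)) = 2 ^ (4 * s) - 1 - n ∧
    weightCount E (n + 1 - 2 ^ (3 * s - 1) + 2 ^ (2 * s - 1)) = 2 ^ (4 * s) - 1 - n ∧
    weightCount E (2 ^ (3 * s - 1)) = n ∧
    weightCount E (n + 1) = 1 ∧
    ∀ w : ℕ, w ≠ 0 → w ≠ n + 1 - 2 ^ (3 * s - 1) →
      w ≠ 2 ^ (3 * s - 1) - 2 ^ (2 * s - 1) →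
      w ≠ n + 1 - 2 ^ (3 * s - 1) + 2 ^ (2 * s - 1) →
      w ≠ 2 ^ (3 * s - 1) → w ≠ n + 1 →
      weightCount E w = 0 := by
  have := Fintype.ofFinite F
  rw [Nat.card_eq_fintype_card] at hcard
  obtain rfl := hE.trans (dualCode_extendedCode_BCHCode_one n β)
  obtain ⟨h₁, h₂, h₃, h₄, h₅⟩ := weights_increasing hs hn
  have hcount := weightCount_range_extendedTraceMap_of_card hs hn hcard hβ
  have hfinrank := finrank_range_of_injective_prod
    (injective_extendedTraceMap_of_card (by lia) hn hcard hβ) (by rw [hcard, ZMod.card])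
  -- From here on only the order of the six weights matters.
  generalize n + 1 - 2 ^ (3 * s - 1) = w₁, 2 ^ (3 * s - 1) - 2 ^ (2 * s - 1) = w₂ at *
  generalize w₁ + 2 ^ (2 * s - 1) = w₃, 2 ^ (3 * s - 1) = w₄, 2 ^ (4 * s) - 1 - n = N at *
  clear * - hcount hfinrank h₁ h₂ h₃ h₄ h₅
  refine ⟨hfinrank, minDist_eq_of_weightCount h₁ ?_ fun w hw hwd => ?_, ?_, ?_, ?_, ?_, ?_, ?_,
    fun w _ _ _ _ _ _ => ?_⟩
  all_goals
    rw [hcount]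
    grind

theorem stmt_5 (s : ℕ) (hs : 2 ≤ s) (n : ℕ) (hn : n = (2 ^ (2 * s) + 1) * (2 ^ s - 1))
    (α : GaloisField 2 (4 * s)) (hα : orderOf α = 2 ^ (4 * s) - 1)
    (β : GaloisField 2 (4 * s)) (hβ : β = α ^ (2 ^ s + 1))
    (E : Submodule (ZMod 2) (Fin (n + 1) → ZMod 2))
    (hE : E = dualCode (extendedCode (BCHCode n β {1}))) :
    Module.finrank (ZMod 2) E = 4 * s + 1 ∧
    minDist E = n + 1 - 2 ^ (3 * s - 1) ∧
    weightCount E 0 = 1 ∧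
    weightCount E (n + 1 - 2 ^ (3 * s - 1)) = n ∧
    weightCount E (2 ^ (3 * s - 1) - 2 ^ (2 * s - 1)) = 2 ^ (4 * s) - 1 - n ∧
    weightCount E (n + 1 - 2 ^ (3 * s - 1) + 2 ^ (2 * s - 1)) = 2 ^ (4 * s) - 1 - n ∧
    weightCount E (2 ^ (3 * s - 1)) = n ∧
    weightCount E (n + 1) = 1 ∧
    ∀ w : ℕ, w ≠ 0 → w ≠ n + 1 - 2 ^ (3 * s - 1) →
      w ≠ 2 ^ (3 * s - 1) - 2 ^ (2 * s - 1) →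
      w ≠ n + 1 - 2 ^ (3 * s - 1) + 2 ^ (2 * s - 1) →
      w ≠ 2 ^ (3 * s - 1) → w ≠ n + 1 →
      weightCount E w = 0 := by
  have hlength : 2 ^ (4 * s) - 1 = (2 ^ s + 1) * n := by
    rw [mul_comm 4 s, pow_mul, ← two_pow_add_one_mul_length hn, Nat.add_sub_cancel]
  have hn0 := length_pos (by lia) hn
  exact stmt_5_general s hs n hn (GaloisField.card 2 (4 * s) (by lia)) β
    (hβ ▸ (hα ▸ IsPrimitiveRoot.orderOf α).pow (by rw [hlength]; positivity) hlength) E hE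
end
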